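/- Let F be a nonzero polynomial in F_q[X_1,...,X_m] of degree d with d/s < q. Then the number of points P ∈ F_q^m at which mult(F,P) ≥ s (i.e., all Hasse derivatives of weight < s vanish) is at most (d/s)·q^{m-1}. Consequently, the multiplicity code Mult^s_d of order s and degree d < s·q has minimum Hamming distance (over the alphabet Σ = F_q^σ) at least q^m − (d/s)·q^{m-1}. -/

import Mathlib

/-- The `i`-th Hasse derivative of a multivariate polynomial `F`: the coefficient of `Z^i`
in `F(X + Z)`. -/
noncomputable def mvHasseDeriv {K : Type*} [CommRing K] {m : ℕ} (i : Fin m →₀ ℕ)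
    (F : MvPolynomial (Fin m) K) : MvPolynomial (Fin m) K :=
  MvPolynomial.coeff i
    (MvPolynomial.eval₂ (MvPolynomial.C.comp MvPolynomial.C)
      (fun j => MvPolynomial.C (MvPolynomial.X j) + MvPolynomial.X j) F)

open MvPolynomial in
/-- Translation of a polynomial: `F(P + Z)`. -/
noncomputable def trP {K : Type*} [Field K] {n : ℕ} (P : Fin n → K) :
    MvPolynomial (Fin n) K →ₐ[K] MvPolynomial (Fin n) K :=
  aeval (fun j => C (P j) + X j)

open MvPolynomial in
lemma trP_ne_zero {K : Type*} [Field K] {n : ℕ} (P : Fin n → K)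
    {F : MvPolynomial (Fin n) K} (hF : F ≠ 0) : trP P F ≠ 0 := by
  intro h
  apply hF
  have h2 : (trP (-P)).comp (trP P) = AlgHom.id K _ := by
    apply MvPolynomial.algHom_ext
    intro j
    simp [trP, algebraMap_eq]
  have h3 := congrArg (fun f => f F) h2
  simp only [AlgHom.comp_apply, h, map_zero, AlgHom.id_apply] at h3
  exact h3.symm

open MvPolynomial in
lemma eval_mvHasseDeriv {K : Type*} [Field K] {n : ℕ} (P : Fin n → K)
    (F : MvPolynomial (Fin n) K) (i : Fin n →₀ ℕ) :
    eval P (mvHasseDeriv i F) = coeff i (trP P F) := by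
  unfold mvHasseDeriv
  rw [← coeff_map]
  congr 1
  induction F using MvPolynomial.induction_on with
  | C a => simp [trP, algebraMap_eq]
  | add p q hp hq => simp only [eval₂_add, map_add, hp, hq]
  | mul_X p j hp => simp only [eval₂_mul, map_mul, hp, eval₂_X]; simp [trP]

open MvPolynomial in
lemma finSuccEquiv_trP {K : Type*} [Field K] {n : ℕ} (b : K) (a : Fin n → K)
    (F : MvPolynomial (Fin (n+1)) K) :
    finSuccEquiv K n (trP (Fin.cons b a : Fin (n+1) → K) F) =
      Polynomial.taylor (C b) (Polynomial.map (trP a : _ →+* _) (finSuccEquiv K n F)) := by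
  induction F using MvPolynomial.induction_on with
  | C r => simp [trP, algebraMap_eq, finSuccEquiv_apply]
  | add p q hp hq => simp only [map_add, hp, hq, Polynomial.map_add]
  | mul_X p j hp =>
    have hX : finSuccEquiv K n (trP (Fin.cons b a : Fin (n+1) → K) (X j)) =
        Polynomial.taylor (C b) (Polynomial.map (trP a : _ →+* _) (finSuccEquiv K n (X j))) := by
      have hC : ∀ r : K, finSuccEquiv K n (C r) = Polynomial.C (C r) := fun r => by
        simp [finSuccEquiv_apply]
      refine Fin.cases ?_ (fun j => ?_) j
      · rw [finSuccEquiv_X_zero, Polynomial.map_X, Polynomial.taylor_X, trP, aeval_X, map_add,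
          finSuccEquiv_X_zero, Fin.cons_zero, hC, add_comm]
      · rw [finSuccEquiv_X_succ, Polynomial.map_C, Polynomial.taylor_C, trP, aeval_X, map_add,
          finSuccEquiv_X_succ, Fin.cons_succ, hC, RingHom.coe_coe, trP, aeval_X, Polynomial.C_add]
    rw [map_mul, map_mul, map_mul, hp, hX, Polynomial.map_mul, Polynomial.taylor_mul]

open MvPolynomial in
lemma fiber_bound {K : Type*} [Field K] [Fintype K] {n : ℕ} (a : Fin n → K)
    (F : MvPolynomial (Fin (n+1)) K) (i : Fin n →₀ ℕ)
    (hi : coeff i (trP a (finSuccEquiv K n F).leadingCoeff) ≠ 0) (μ : K → ℕ)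
    (hμ : ∀ b, ∀ j : Fin (n+1) →₀ ℕ, (j.sum fun _ n => n) < μ b →
      coeff j (trP (Fin.cons b a : Fin (n+1) → K) F) = 0) :
    ∑ b, μ b ≤ Fintype.card K * (i.sum fun _ n => n) + (finSuccEquiv K n F).natDegree := by
  classical
  set f := finSuccEquiv K n F with hf
  set t := f.natDegree
  set e := i.sum fun _ n => n with he
  let g : Polynomial K := ∑ j ∈ Finset.range (t+1),
    Polynomial.monomial j (coeff i (trP a (f.coeff j)))
  have hgc : g.coeff t = coeff i (trP a f.leadingCoeff) := by
    simp [g, Polynomial.coeff_monomial, t]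
  have hg0 : g ≠ 0 := by
    intro h; rw [h] at hgc; exact hi (by rw [← hgc]; simp)
  have hgdeg : g.natDegree ≤ t := by
    apply Polynomial.natDegree_sum_le_of_forall_le
    intro j hj
    exact (Polynomial.natDegree_monomial_le _).trans (by simpa [Nat.lt_succ_iff] using hj)
  have hfs : f = ∑ j ∈ Finset.range (t+1), Polynomial.monomial j (f.coeff j) :=
    f.as_sum_range
  have key : ∀ b k, (Polynomial.taylor b g).coeff k =
      coeff (i.cons k) (trP (Fin.cons b a : Fin (n+1) → K) F) := by
    intro b k
    rw [← finSuccEquiv_coeff_coeff, finSuccEquiv_trP, ← hf]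
    conv_rhs => rw [hfs]
    simp only [g, map_sum, Polynomial.map_sum, Polynomial.finsetSum_coeff, coeff_sum,
      Polynomial.map_monomial, Polynomial.taylor_coeff, Polynomial.hasseDeriv_monomial,
      Polynomial.eval_monomial]
    refine Finset.sum_congr rfl fun j _ => ?_
    rw [← C_pow, mul_comm _ (C _), coeff_C_mul, ← map_natCast (C : K →+* MvPolynomial (Fin n) K),
      coeff_C_mul]
    simp only [RingHom.coe_coe]
    ring
  have hb : ∀ b, μ b ≤ e + g.rootMultiplicity b := by
    intro b
    have h1 : Polynomial.X ^ (μ b - e) ∣ Polynomial.taylor b g := by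
      rw [Polynomial.X_pow_dvd_iff]
      intro k hk
      rw [key]
      apply hμ
      rw [Finsupp.sum_cons]
      omega
    have h2 : (Polynomial.X - Polynomial.C b) ^ (μ b - e) ∣ g := by
      obtain ⟨h, hh⟩ := h1
      refine ⟨Polynomial.taylor (-b) h, ?_⟩
      apply Polynomial.taylor_injective b
      rw [hh, Polynomial.taylor_mul, Polynomial.taylor_taylor, Polynomial.taylor_pow]
      simp
    have := (Polynomial.le_rootMultiplicity_iff hg0).2 h2
    omega
  calc ∑ b, μ b ≤ ∑ b, (e + g.rootMultiplicity b) := Finset.sum_le_sum fun b _ => hb b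
    _ = Fintype.card K * e + ∑ b, g.roots.count b := by
        simp [Finset.sum_add_distrib]
    _ = Fintype.card K * e + Multiset.card g.roots := by
        rw [Multiset.sum_count_eq_card (s := Finset.univ) (by simp)]
    _ ≤ _ := by
        have := g.card_roots'
        omega

open MvPolynomial in
lemma sum_mult_bound {K : Type*} [Field K] [Fintype K] (n : ℕ) :
    ∀ (d : ℕ) (F : MvPolynomial (Fin n) K), F ≠ 0 → F.totalDegree ≤ d →
    ∀ μ : (Fin n → K) → ℕ, (∀ P, ∀ j : Fin n →₀ ℕ, (j.sum fun _ n => n) < μ P →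
      coeff j (trP P F) = 0) →
    Fintype.card K * ∑ P, μ P ≤ d * Fintype.card K ^ n := by
  induction n with
  | zero =>
    intro d F hF hd μ hμ
    have : ∀ P, μ P = 0 := by
      intro P
      by_contra h
      apply trP_ne_zero P hF
      ext j
      rw [coeff_zero]
      apply hμ
      rw [Subsingleton.elim j 0]
      simpa using Nat.pos_of_ne_zero h
    simp [this]
  | succ n ih =>
    intro d F hF hd μ hμ
    set f := finSuccEquiv K n F with hf
    have hf0 : f ≠ 0 := by simpa [hf] using hF
    have hl : f.leadingCoeff ≠ 0 := by simpa using hf0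
    have hdeg : f.leadingCoeff.totalDegree + f.natDegree ≤ d :=
      (totalDegree_coeff_finSuccEquiv_add_le F f.natDegree hl).trans hd
    have hex : ∀ a : Fin n → K, ∃ i : Fin n →₀ ℕ, coeff i (trP a f.leadingCoeff) ≠ 0 ∧
        ∀ j : Fin n →₀ ℕ, (j.sum fun _ n => n) < (i.sum fun _ n => n) →
          coeff j (trP a f.leadingCoeff) = 0 := by
      intro a
      have hne : ∃ i, coeff i (trP a f.leadingCoeff) ≠ 0 :=
        ne_zero_iff.1 (trP_ne_zero a hl)
      have hwf := (measure (fun i : Fin n →₀ ℕ => i.sum fun _ n => n)).wf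
      obtain ⟨i, hi, hmin⟩ := hwf.has_min {i | coeff i (trP a f.leadingCoeff) ≠ 0} hne
      refine ⟨i, hi, fun j hj => ?_⟩
      by_contra h
      exact hmin j h hj
    choose I hI hImin using hex
    have h1 := ih (d - f.natDegree) f.leadingCoeff hl (by omega)
      (fun a => (I a).sum fun _ n => n) hImin
    have h2 : ∑ P, μ P = ∑ a : Fin n → K, ∑ b, μ (Fin.cons b a) := by
      rw [← (Fin.consEquiv fun _ => K).sum_comp, Fintype.sum_prod_type_right]
      rfl
    have h3 : ∑ P, μ P ≤ Fintype.card K * ∑ a, ((I a).sum fun _ n => n) +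
        Fintype.card K ^ n * f.natDegree := by
      rw [h2, Finset.mul_sum]
      calc _ ≤ ∑ a : Fin n → K, (Fintype.card K * ((I a).sum fun _ n => n) + f.natDegree) :=
            Finset.sum_le_sum fun a _ => fiber_bound a F (I a) (hI a) _ (fun b => hμ _)
        _ = _ := by simp [Finset.sum_add_distrib]
    obtain ⟨c, hc⟩ : ∃ c, d = c + f.natDegree := ⟨d - f.natDegree, by omega⟩
    rw [hc] at h1 ⊢
    rw [Nat.add_sub_cancel] at h1
    calc _ ≤ Fintype.card K * (c * Fintype.card K ^ n + Fintype.card K ^ n * f.natDegree) :=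
          Nat.mul_le_mul_left _ (h3.trans (Nat.add_le_add_right h1 _))
      _ = _ := by ring

open MvPolynomial in
lemma card_mult_bound {K : Type*} [Field K] [Fintype K] {m s d : ℕ} (hm : 1 ≤ m) (hs : 1 ≤ s)
    (F : MvPolynomial (Fin m) K) (hF : F ≠ 0) (hd : F.totalDegree ≤ d) :
    (Nat.card {P : Fin m → K | ∀ i : Fin m →₀ ℕ, (i.sum fun _ n => n) < s →
          MvPolynomial.eval P (mvHasseDeriv i F) = 0} : ℚ) ≤
        (d / s) * (Fintype.card K : ℚ) ^ (m - 1) := by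
  classical
  set S := {P : Fin m → K | ∀ i : Fin m →₀ ℕ, (i.sum fun _ n => n) < s →
          MvPolynomial.eval P (mvHasseDeriv i F) = 0} with hS
  have h := sum_mult_bound m d F hF hd (fun P => if P ∈ S then s else 0) (by
    intro P j hj
    by_cases hP : P ∈ S
    · simp only [hP, if_true] at hj
      rw [← eval_mvHasseDeriv]
      exact hP j hj
    · simp [hP] at hj)
  have hc : ∑ P, (if P ∈ S then s else 0) = Nat.card S * s := by
    rw [← Finset.sum_filter, Finset.sum_const, smul_eq_mul, Nat.card_eq_fintype_card,
      Fintype.card_subtype]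
  rw [hc] at h
  obtain ⟨k, rfl⟩ : ∃ k, m = k + 1 := ⟨m - 1, by omega⟩
  have hq : 0 < Fintype.card K := Fintype.card_pos
  have h' : Nat.card S * s ≤ d * Fintype.card K ^ k := by
    apply Nat.le_of_mul_le_mul_left _ hq
    calc _ ≤ _ := h
      _ = _ := by ring
  have hs' : (0 : ℚ) < s := by exact_mod_cast hs
  rw [Nat.add_sub_cancel, div_mul_eq_mul_div, le_div_iff₀ hs']
  exact_mod_cast h'

/-- a nonzero `F` of degree `d` with `d/s < q` has at most `(d/s)·q^{m-1}`
points of multiplicity `≥ s`; hence the multiplicity code `Mult^s_d` (for `d < s·q`) has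
minimum Hamming distance at least `q^m − (d/s)·q^{m-1}` over the alphabet `F_q^σ`. -/
theorem mult_code_distance {Fq : Type*} [Field Fq] [Fintype Fq] {m s d : ℕ}
    (hm : 1 ≤ m) (hs : 1 ≤ s) (hd : (d : ℚ) / s < Fintype.card Fq) :
    (∀ F : MvPolynomial (Fin m) Fq, F ≠ 0 → F.totalDegree ≤ d →
      (Nat.card {P : Fin m → Fq | ∀ i : Fin m →₀ ℕ, (i.sum fun _ n => n) < s →
          MvPolynomial.eval P (mvHasseDeriv i F) = 0} : ℚ) ≤
        (d / s) * (Fintype.card Fq : ℚ) ^ (m - 1)) ∧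
    (∀ F G : MvPolynomial (Fin m) Fq, F.totalDegree ≤ d → G.totalDegree ≤ d → F ≠ G →
      ((Fintype.card Fq : ℚ) ^ m - (d / s) * (Fintype.card Fq : ℚ) ^ (m - 1)) ≤
        (Nat.card {P : Fin m → Fq | ∃ i : Fin m →₀ ℕ, (i.sum fun _ n => n) < s ∧
          MvPolynomial.eval P (mvHasseDeriv i F) ≠ MvPolynomial.eval P (mvHasseDeriv i G)} :
            ℚ)) := by
  classical
  refine ⟨fun F hF hdeg => card_mult_bound hm hs F hF hdeg, fun F G hF hG hne => ?_⟩
  have h := card_mult_bound (d := d) hm hs (F - G) (sub_ne_zero.2 hne)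
    ((MvPolynomial.totalDegree_sub F G).trans (max_le hF hG))
  set A := {P : Fin m → Fq | ∀ i : Fin m →₀ ℕ, (i.sum fun _ n => n) < s →
          MvPolynomial.eval P (mvHasseDeriv i (F - G)) = 0} with hA
  set B := {P : Fin m → Fq | ∃ i : Fin m →₀ ℕ, (i.sum fun _ n => n) < s ∧
          MvPolynomial.eval P (mvHasseDeriv i F) ≠ MvPolynomial.eval P (mvHasseDeriv i G)} with hB
  have hAB : B = Aᶜ := by
    ext P
    simp only [hA, hB, Set.mem_setOf_eq, Set.mem_compl_iff, eval_mvHasseDeriv, map_sub,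
      MvPolynomial.coeff_sub, sub_eq_zero]
    push Not
    rfl
  have hcard : Nat.card A + Nat.card B = Fintype.card Fq ^ m := by
    have := Set.ncard_add_ncard_compl A
    rw [hAB, Nat.card_coe_set_eq, Nat.card_coe_set_eq, this]
    simp
  have hcard' : (Nat.card A : ℚ) + Nat.card B = (Fintype.card Fq : ℚ) ^ m := by
    exact_mod_cast hcard
  linarith
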